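/- Let n ≥ 1 and k ≥ 1 be integers, let t > 0, and let V₁, …, V_k ∈ L^∞(ℝⁿ) ∩ L^k(ℝⁿ) have compact support. Then |T_k(t; V₁,…,V_k)| ≤ (4πt)^{−n/2} (t^k / k!) ∏_{j=1}^k ‖V_j‖_{L^k(ℝⁿ)}. -/

import Mathlib

open MeasureTheory Real Filter Topology

/-- The free heat kernel `p_u(x,y) = (4πu)^{-n/2} e^{-|x-y|²/(4u)}` on `ℝⁿ`. -/
noncomputable def heatKernel (n : ℕ) (u : ℝ) (x y : EuclideanSpace ℝ (Fin n)) : ℝ :=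
  (4 * Real.pi * u) ^ (-(n : ℝ) / 2) * Real.exp (-‖x - y‖ ^ 2 / (4 * u))

/-- The multilinear Duhamel trace term `T_k(t; V₁,…,V_k)`. -/
noncomputable def traceTermMulti (n k : ℕ)
    (V : Fin k → (EuclideanSpace ℝ (Fin n) → ℝ)) (t : ℝ) : ℝ :=
  ∫ s in {s : Fin k → ℝ | StrictMono s ∧ ∀ i, 0 < s i ∧ s i < t},
    ∫ x : EuclideanSpace ℝ (Fin n),
      ∫ y : Fin k → EuclideanSpace ℝ (Fin n),
        (∏ i : Fin (k + 1),
            heatKernel n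
              ((Fin.cons 0 (Fin.snoc s t) : Fin (k + 2) → ℝ) i.succ -
                (Fin.cons 0 (Fin.snoc s t) : Fin (k + 2) → ℝ) i.castSucc)
              ((Fin.cons x (Fin.snoc y x) : Fin (k + 2) → EuclideanSpace ℝ (Fin n)) i.castSucc)
              ((Fin.cons x (Fin.snoc y x) : Fin (k + 2) → EuclideanSpace ℝ (Fin n)) i.succ)) *
          ∏ i : Fin k, V i (y i)

/-!
For fixed times, the points `(x, y₁, …, y_k)` weighted by the product of heat kernels form a measure
on loops. It is invariant under translating all points at once, so the law of each single `y_j` is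
`c` times Lebesgue measure, where by Chapman–Kolmogorov the constant is
`c = p_t(0, 0) = (4πt)^{-n/2}`, whatever the times are. Hölder's inequality for the loop measure,
with any exponents satisfying `∑ 1/p_j = 1`, thus bounds the space integral by
`(4πt)^{-n/2} ∏ ‖V_j‖_{p_j}`, and the simplex of times has volume at most `t^k / k!`.
-/

open scoped ENNReal Function

section Hoelder

lemma eLpNorm_prod_le {ι α 𝕜 : Type*} {_ : MeasurableSpace α} {μ : Measure α} [NormedCommRing 𝕜]
    [NormOneClass 𝕜] {s : Finset ι} {f : ι → α → 𝕜} {p : ι → ℝ≥0∞}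
    (hf : ∀ i ∈ s, AEStronglyMeasurable (f i) μ) :
    eLpNorm (∏ i ∈ s, f i) (∑ i ∈ s, (p i)⁻¹)⁻¹ μ ≤ ∏ i ∈ s, eLpNorm (f i) (p i) μ := by
  induction s using Finset.cons_induction with
  | empty =>
    have h : eLpNorm (fun _ : α => (1 : 𝕜)) ∞ μ ≤ 1 := by
      rw [eLpNorm_exponent_top]
      exact eLpNormEssSup_le_of_ae_enorm_bound (.of_forall fun _ => enorm_one.le)
    simpa only [Finset.prod_empty, Finset.sum_empty, ENNReal.inv_zero, Pi.one_def] using h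
  | cons i s hi ih =>
    rw [Finset.forall_mem_cons] at hf
    rw [Finset.prod_cons, Finset.prod_cons]
    have : ENNReal.HolderTriple (p i) (∑ j ∈ s, (p j)⁻¹)⁻¹
        (∑ j ∈ Finset.cons i s hi, (p j)⁻¹)⁻¹ :=
      ⟨by simp only [inv_inv, Finset.sum_cons]⟩
    rw [← smul_eq_mul]
    exact (eLpNorm_smul_le_mul_eLpNorm (s.aestronglyMeasurable_prod hf.2) hf.1).trans
      (mul_le_mul_right (ih hf.2) _)

lemma prod_ennreal_rpow_eq_rpow_sum {ι : Type*} (c : ℝ≥0∞) {s : Finset ι} {r : ι → ℝ}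
    (hr : ∀ i ∈ s, 0 ≤ r i) : ∏ i ∈ s, c ^ r i = c ^ ∑ i ∈ s, r i := by
  induction s using Finset.cons_induction with
  | empty => simp
  | cons i s hi ih =>
    rw [Finset.forall_mem_cons] at hr
    rw [Finset.prod_cons, Finset.sum_cons, ih hr.2,
      ENNReal.rpow_add_of_nonneg _ _ hr.1 (Finset.sum_nonneg hr.2)]

lemma lintegral_prod_enorm_comp_le {ι Ω E 𝕜 : Type*} [Fintype ι] [MeasurableSpace Ω]
    [MeasurableSpace E] [NormedCommRing 𝕜] [NormOneClass 𝕜] {ν : Measure Ω} {μ : Measure E}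
    {c : ℝ≥0∞} {X : ι → Ω → E} (hX : ∀ j, AEMeasurable (X j) ν) (hmap : ∀ j, ν.map (X j) = c • μ)
    {V : ι → E → 𝕜} (hV : ∀ j, AEStronglyMeasurable (V j) μ)
    {p : ι → ℝ≥0∞} (hp : ∑ j, (p j)⁻¹ = 1) :
    ∫⁻ ω, ‖∏ j, V j (X j ω)‖ₑ ∂ν ≤ c * ∏ j, eLpNorm (V j) (p j) μ := by
  have hVmap j : AEStronglyMeasurable (V j) (ν.map (X j)) := hmap j ▸ (hV j).smul_measure c
  have hp_ne_top j : (p j)⁻¹ ≠ ∞ := fun h =>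
    ENNReal.one_ne_top (hp ▸ ENNReal.sum_eq_top.2 ⟨j, Finset.mem_univ j, h⟩)
  have hsum : ∑ j, (1 / p j).toReal = 1 := by
    simp only [one_div, ← ENNReal.toReal_sum fun j _ => hp_ne_top j, hp, ENNReal.toReal_one]
  calc ∫⁻ ω, ‖∏ j, V j (X j ω)‖ₑ ∂ν
      = eLpNorm (∏ j, V j ∘ X j) (∑ j, (p j)⁻¹)⁻¹ ν := by
        simp only [hp, inv_one, eLpNorm_one_eq_lintegral_enorm, Finset.prod_apply,
          Function.comp_apply]
    _ ≤ ∏ j, eLpNorm (V j ∘ X j) (p j) ν :=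
        eLpNorm_prod_le fun j _ => (hVmap j).comp_aemeasurable (hX j)
    _ = ∏ j, eLpNorm (V j) (p j) (c • μ) := by
        simp only [← eLpNorm_map_measure (hVmap _) (hX _), hmap]
    _ ≤ ∏ j, c ^ (1 / p j).toReal * eLpNorm (V j) (p j) μ :=
        Finset.prod_le_prod' fun j _ => eLpNorm_smul_measure_le c (V j) (p j) μ
    _ = c * ∏ j, eLpNorm (V j) (p j) μ := by
        rw [Finset.prod_mul_distrib,
          prod_ennreal_rpow_eq_rpow_sum c fun _ _ => ENNReal.toReal_nonneg, hsum,
          ENNReal.rpow_one]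

end Hoelder

section WithEndpoints

variable {α : Type*} {k : ℕ}

/-- The tuple `(a, f 0, …, f (k - 1), b)`. It is used both for the partition `0 < s₁ < ⋯ < s_k < t`
of a time interval and for the successive points `x, y₁, …, y_k, x` of a loop. -/
def withEndpoints (a b : α) (f : Fin k → α) : Fin (k + 2) → α :=
  Fin.cons a (Fin.snoc f b)

lemma withEndpoints_last (a b : α) (f : Fin k → α) :
    withEndpoints a b f (Fin.last (k + 1)) = b := by
  rw [withEndpoints, ← Fin.succ_last, Fin.cons_succ, Fin.snoc_last]

lemma withEndpoints_cons (a b c : α) (f : Fin k → α) :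
    withEndpoints a b (Fin.cons c f : Fin (k + 1) → α) = Fin.cons a (withEndpoints c b f) := by
  rw [withEndpoints, ← Fin.cons_snoc_eq_snoc_cons, withEndpoints]

lemma comp_withEndpoints {β : Type*} (g : α → β) (a b : α) (f : Fin k → α) :
    g ∘ withEndpoints a b f = withEndpoints (g a) (g b) (g ∘ f) := by
  simp only [withEndpoints, Fin.comp_cons, Fin.comp_snoc]

lemma measurable_withEndpoints {β : Type*} [MeasurableSpace α] [MeasurableSpace β]
    {f g : β → α} {h : β → Fin k → α} (hf : Measurable f) (hg : Measurable g)
    (hh : Measurable h) (i : Fin (k + 2)) :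
    Measurable fun p => withEndpoints (f p) (g p) (h p) i := by
  refine Fin.cases (by simpa only [withEndpoints, Fin.cons_zero]) (fun i => ?_) i
  simp only [withEndpoints, Fin.cons_succ]
  refine Fin.lastCases (by simpa only [Fin.snoc_last]) (fun i => ?_) i
  simpa only [Fin.snoc_castSucc] using measurable_pi_iff.1 hh i

lemma strictMono_snoc [Preorder α] {f : Fin k → α} {b : α} (hf : StrictMono f)
    (hb : ∀ i, f i < b) : StrictMono (Fin.snoc f b : Fin (k + 1) → α) := by
  intro i j hij
  induction i using Fin.lastCases with
  | last => exact absurd hij (Fin.le_last j).not_gt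
  | cast i =>
    induction j using Fin.lastCases with
    | last => simpa only [Fin.snoc_castSucc, Fin.snoc_last] using hb i
    | cast j => simpa only [Fin.snoc_castSucc] using hf (Fin.castSucc_lt_castSucc_iff.1 hij)

lemma strictMono_withEndpoints [Preorder α] {a b : α} {f : Fin k → α} (hab : a < b)
    (hf : StrictMono f) (hfab : ∀ i, f i ∈ Set.Ioo a b) : StrictMono (withEndpoints a b f) := by
  refine Fin.strictMono_cons.2 ⟨fun i => ?_, strictMono_snoc hf fun i => (hfab i).2⟩
  induction i using Fin.lastCases with
  | last => simpa only [Fin.snoc_last] using hab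
  | cast i => simpa only [Fin.snoc_castSucc] using (hfab i).1

lemma sum_withEndpoints_succ_sub_castSucc [AddCommGroup α] (a b : α) (f : Fin k → α) :
    ∑ i : Fin (k + 1), (withEndpoints a b f i.succ - withEndpoints a b f i.castSucc) = b - a := by
  have hsum := (Fin.sum_univ_succ (withEndpoints a b f)).symm.trans
    (Fin.sum_univ_castSucc (withEndpoints a b f))
  rw [withEndpoints_last] at hsum
  rw [Finset.sum_sub_distrib, sub_eq_sub_iff_add_eq_add, add_comm, add_comm b]
  exact hsum

end WithEndpoints

section OrderedTuples

variable {α : Type*} [LinearOrder α]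

lemma eq_of_strictMono_comp_perm {k : ℕ} {s : Fin k → α} {σ τ : Equiv.Perm (Fin k)}
    (hσ : StrictMono (s ∘ σ)) (hτ : StrictMono (s ∘ τ)) : σ = τ := by
  have hs : Function.Injective s := hσ.injective.of_comp_right σ.surjective
  exact Equiv.coe_fn_injective
    (hs.comp_left (Tuple.unique_monotone hσ.monotone hτ.monotone))

variable [TopologicalSpace α] [OrderClosedTopology α] [SecondCountableTopology α]
  [MeasurableSpace α] [OpensMeasurableSpace α]

lemma measurableSet_setOf_strictMono (k : ℕ) : MeasurableSet {s : Fin k → α | StrictMono s} := by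
  simp only [StrictMono, Set.ofPred_forall]
  exact .iInter fun i => .iInter fun j => .iInter fun _ =>
    measurableSet_lt (measurable_pi_apply i) (measurable_pi_apply j)

/- The `k!` sets obtained from the ordered tuples by permuting coordinates are disjoint, have equal
measure and lie in `A ^ k`. -/
lemma factorial_mul_pi_strictMono_le (μ : Measure α) [SigmaFinite μ] (k : ℕ) {A : Set α}
    (hA : MeasurableSet A) :
    k.factorial * Measure.pi (fun _ : Fin k => μ) {s | StrictMono s ∧ ∀ i, s i ∈ A} ≤ μ A ^ k := by
  set S : Set (Fin k → α) := {s | StrictMono s ∧ ∀ i, s i ∈ A}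
  have hpi : MeasurableSet {s : Fin k → α | ∀ i, s i ∈ A} := by
    simpa only [Set.pi, Set.mem_univ, forall_const] using MeasurableSet.univ_pi fun _ : Fin k => hA
  have hS : MeasurableSet S := (measurableSet_setOf_strictMono k).inter hpi
  have hperm (σ : Equiv.Perm (Fin k)) : MeasurePreserving (fun s : Fin k → α => s ∘ σ)
      (Measure.pi fun _ => μ) (Measure.pi fun _ => μ) :=
    measurePreserving_arrowCongr' (fun _ => μ) (fun _ => μ) σ.symm (.refl α) fun _ => .id μ
  have hdisj : Pairwise (Disjoint on fun σ : Equiv.Perm (Fin k) => (fun s => s ∘ σ) ⁻¹' S) :=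
    fun σ τ hne => Set.disjoint_left.2 fun _ hσ hτ => hne (eq_of_strictMono_comp_perm hσ.1 hτ.1)
  have hsub : ⋃ σ : Equiv.Perm (Fin k), (fun s => s ∘ σ) ⁻¹' S ⊆ Set.univ.pi fun _ => A :=
    Set.iUnion_subset fun σ s hs i _ => by simpa using hs.2 (σ.symm i)
  calc k.factorial * Measure.pi (fun _ => μ) S
      = ∑ σ : Equiv.Perm (Fin k), Measure.pi (fun _ => μ) ((fun s => s ∘ σ) ⁻¹' S) := by
        simp only [(hperm _).measure_preimage hS.nullMeasurableSet, Finset.sum_const,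
          Finset.card_univ, Fintype.card_perm, Fintype.card_fin, nsmul_eq_mul]
    _ = Measure.pi (fun _ => μ) (⋃ σ : Equiv.Perm (Fin k), (fun s => s ∘ σ) ⁻¹' S) := by
        rw [measure_iUnion hdisj fun σ => (hperm σ).measurable hS, tsum_fintype]
    _ ≤ Measure.pi (fun _ => μ) (Set.univ.pi fun _ => A) := measure_mono hsub
    _ = μ A ^ k := by simp only [Measure.pi_pi, Finset.prod_const, Finset.card_univ,
        Fintype.card_fin]

end OrderedTuples

lemma volume_strictMono_Ioo_le (k : ℕ) {t : ℝ} (ht : 0 ≤ t) :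
    volume {s : Fin k → ℝ | StrictMono s ∧ ∀ i, s i ∈ Set.Ioo 0 t} ≤
      ENNReal.ofReal (t ^ k / k.factorial) := by
  have h := factorial_mul_pi_strictMono_le (volume : Measure ℝ) k
    (measurableSet_Ioo (a := 0) (b := t))
  rw [Real.volume_Ioo, sub_zero, ← ENNReal.ofReal_pow ht] at h
  rw [ENNReal.ofReal_div_of_pos (by positivity), ENNReal.ofReal_natCast, volume_pi]
  exact (ENNReal.le_div_iff_mul_le (by simp [Nat.factorial_ne_zero]) (by simp)).2
    ((mul_comm _ _).trans_le h)

section ChainWeight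

variable {E : Type*} {k : ℕ}

/-- The weight `q₀(x, z₁) q₁(z₁, z₂) ⋯ q_k(z_k, y)` of the path from `x` to `y` through the
intermediate points `z`. -/
noncomputable def chainWeight (q : Fin (k + 1) → E → E → ℝ≥0∞) (x y : E) (z : Fin k → E) : ℝ≥0∞ :=
  ∏ i : Fin (k + 1), q i (withEndpoints x y z i.castSucc) (withEndpoints x y z i.succ)

lemma chainWeight_cons (q : Fin (k + 2) → E → E → ℝ≥0∞) (x y a : E) (z : Fin k → E) :
    chainWeight q x y (Fin.cons a z) = q 0 x a * chainWeight (fun i => q i.succ) a y z := by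
  rw [chainWeight, Fin.prod_univ_succ, withEndpoints_cons]
  rfl

lemma chainWeight_map {F : Type*} (g : E → F) (q : Fin (k + 1) → F → F → ℝ≥0∞) (x y : E)
    (z : Fin k → E) :
    chainWeight q (g x) (g y) (g ∘ z) = chainWeight (fun i a b => q i (g a) (g b)) x y z := by
  simp only [chainWeight, ← comp_withEndpoints, Function.comp_apply]

variable [MeasurableSpace E]

lemma measurable_chainWeight {β : Type*} [MeasurableSpace β] {q : Fin (k + 1) → E → E → ℝ≥0∞}
    (hq : ∀ i, Measurable (Function.uncurry (q i))) {f g : β → E} {h : β → Fin k → E}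
    (hf : Measurable f) (hg : Measurable g) (hh : Measurable h) :
    Measurable fun b => chainWeight q (f b) (g b) (h b) :=
  Finset.measurable_fun_prod _ fun i _ => (hq i).comp <|
    (measurable_withEndpoints hf hg hh i.castSucc).prodMk (measurable_withEndpoints hf hg hh i.succ)

variable (μ : Measure E) [SigmaFinite μ]

lemma lintegral_chainWeight_succ {q : Fin (k + 2) → E → E → ℝ≥0∞}
    (hq : ∀ i, Measurable (Function.uncurry (q i))) (x y : E) :
    ∫⁻ z, chainWeight q x y z ∂(Measure.pi fun _ => μ) =
      ∫⁻ a, q 0 x a * ∫⁻ z, chainWeight (fun i => q i.succ) a y z ∂(Measure.pi fun _ => μ) ∂μ := by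
  have hchain : Measurable fun w : E × (Fin k → E) =>
      chainWeight (fun i => q i.succ) w.1 y w.2 :=
    measurable_chainWeight (fun i => hq i.succ) measurable_fst measurable_const measurable_snd
  have hq₀ : Measurable (q 0 x) := (hq 0).comp measurable_prodMk_left
  calc ∫⁻ z, chainWeight q x y z ∂(Measure.pi fun _ => μ)
      = ∫⁻ w : E × (Fin k → E), chainWeight q x y (Fin.cons w.1 w.2)
          ∂μ.prod (Measure.pi fun _ => μ) := by
        rw [← ((measurePreserving_piFinSuccAbove (fun _ : Fin (k + 1) => μ) 0).symm
          _).lintegral_comp_emb (MeasurableEquiv.measurableEmbedding _)]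
        simp [MeasurableEquiv.piFinSuccAbove, Fin.insertNthEquiv, Fin.insertNth_zero']
    _ = ∫⁻ a, ∫⁻ z, q 0 x a * chainWeight (fun i => q i.succ) a y z
          ∂(Measure.pi fun _ => μ) ∂μ := by
        simp only [chainWeight_cons]
        exact lintegral_prod _ (by fun_prop)
    _ = ∫⁻ a, q 0 x a * ∫⁻ z, chainWeight (fun i => q i.succ) a y z
          ∂(Measure.pi fun _ => μ) ∂μ :=
        lintegral_congr fun a => lintegral_const_mul _ (hchain.comp measurable_prodMk_left)

lemma lintegral_chainWeight_of_semigroup {P : ℝ → E → E → ℝ≥0∞}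
    (hP : ∀ u, Measurable (Function.uncurry (P u)))
    (hPadd : ∀ u v, 0 < u → 0 < v → ∀ x y, ∫⁻ a, P u x a * P v a y ∂μ = P (u + v) x y)
    {u : Fin (k + 1) → ℝ} (hu : ∀ i, 0 < u i) (x y : E) :
    ∫⁻ z, chainWeight (fun i => P (u i)) x y z ∂(Measure.pi fun _ => μ) = P (∑ i, u i) x y := by
  induction k generalizing x with
  | zero =>
    rw [lintegral_unique]
    simp [chainWeight, withEndpoints, Fin.snoc]
  | succ k ih =>
    rw [lintegral_chainWeight_succ μ fun i => hP (u i)]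
    simp only [ih fun i => hu i.succ]
    rw [hPadd _ _ (hu 0) (Finset.sum_pos (fun i _ => hu i.succ) Finset.univ_nonempty),
      Fin.sum_univ_succ u]

/-- The measure of density `q₀(x, z₁) q₁(z₁, z₂) ⋯ q_k(z_k, x)` on loops, encoded as pairs `(x, z)`
of a base point and the `k` intermediate points. -/
noncomputable def loopMeasure (q : Fin (k + 1) → E → E → ℝ≥0∞) : Measure (E × (Fin k → E)) :=
  (μ.prod (Measure.pi fun _ => μ)).withDensity fun w => chainWeight q w.1 w.1 w.2

lemma measurable_chainWeight_loop {q : Fin (k + 1) → E → E → ℝ≥0∞}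
    (hq : ∀ i, Measurable (Function.uncurry (q i))) :
    Measurable fun w : E × (Fin k → E) => chainWeight q w.1 w.1 w.2 :=
  measurable_chainWeight hq measurable_fst measurable_fst measurable_snd

lemma lintegral_loopMeasure {q : Fin (k + 1) → E → E → ℝ≥0∞}
    (hq : ∀ i, Measurable (Function.uncurry (q i))) {f : E × (Fin k → E) → ℝ≥0∞}
    (hf : AEMeasurable f (μ.prod (Measure.pi fun _ => μ))) :
    ∫⁻ w, f w ∂loopMeasure μ q =
      ∫⁻ x, ∫⁻ z, chainWeight q x x z * f (x, z) ∂(Measure.pi fun _ => μ) ∂μ := by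
  have hweight :=
    (measurable_chainWeight_loop hq).aemeasurable (μ := μ.prod (Measure.pi fun _ => μ))
  rw [loopMeasure, lintegral_withDensity_eq_lintegral_mul₀ hweight hf,
    lintegral_prod _ (hweight.mul hf)]
  rfl

/- Shift a loop so that its base point is the origin: the base point then ranges over all of `E`. -/
lemma map_loopMeasure_eval [AddGroup E] [MeasurableAdd₂ E] [μ.IsAddLeftInvariant]
    [μ.IsAddRightInvariant] {q : Fin (k + 1) → E → E → ℝ≥0∞}
    (hq : ∀ i, Measurable (Function.uncurry (q i)))
    (hq_add : ∀ i x y a, q i (x + a) (y + a) = q i x y) (j : Fin k) :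
    (loopMeasure μ q).map (fun w => w.2 j) =
      (∫⁻ z, chainWeight q 0 0 z ∂(Measure.pi fun _ => μ)) • μ := by
  have hshift (x : E) (z : Fin k → E) :
      chainWeight q x x (z + fun _ => x) = chainWeight q 0 0 z := by
    have h := chainWeight_map (· + x) q 0 0 z
    simp only [zero_add, hq_add] at h
    exact h
  have hclosed : Measurable fun z : Fin k → E => chainWeight q 0 0 z :=
    measurable_chainWeight hq measurable_const measurable_const measurable_id
  refine Measure.ext_of_lintegral _ fun f hf => ?_
  calc ∫⁻ y, f y ∂(loopMeasure μ q).map (fun w => w.2 j)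
      = ∫⁻ x, ∫⁻ z, chainWeight q x x z * f (z j) ∂(Measure.pi fun _ => μ) ∂μ := by
        rw [lintegral_map hf (by fun_prop), lintegral_loopMeasure μ hq (by fun_prop)]
    _ = ∫⁻ x, ∫⁻ z, chainWeight q 0 0 z * f (z j + x) ∂(Measure.pi fun _ => μ) ∂μ := by
        refine lintegral_congr fun x => ?_
        rw [← lintegral_add_right_eq_self _ (fun _ => x)]
        simp only [hshift, Pi.add_apply]
    _ = ∫⁻ z, ∫⁻ x, chainWeight q 0 0 z * f (z j + x) ∂μ ∂(Measure.pi fun _ => μ) :=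
        lintegral_lintegral_swap (by fun_prop)
    _ = ∫⁻ z, chainWeight q 0 0 z * ∫⁻ x, f x ∂μ ∂(Measure.pi fun _ => μ) := by
        refine lintegral_congr fun z => ?_
        rw [lintegral_const_mul _ (by fun_prop), lintegral_add_left_eq_self f]
    _ = ∫⁻ y, f y ∂(∫⁻ z, chainWeight q 0 0 z ∂(Measure.pi fun _ => μ)) • μ := by
        rw [lintegral_mul_const _ hclosed, lintegral_smul_measure, smul_eq_mul]

end ChainWeight

lemma enorm_finset_prod {ι R : Type*} [NormedField R] (s : Finset ι) (f : ι → R) :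
    ‖∏ i ∈ s, f i‖ₑ = ∏ i ∈ s, ‖f i‖ₑ := by
  simp only [enorm, nnnorm_prod, ENNReal.ofNNReal_finsetProd]

lemma enorm_integral_loop_le {E 𝕜 : Type*} [MeasurableSpace E] {μ : Measure E} [SigmaFinite μ]
    [RCLike 𝕜] {k : ℕ} {K : Fin (k + 1) → E → E → 𝕜}
    (hK : ∀ i, Measurable (Function.uncurry (K i))) {V : Fin k → E → 𝕜}
    (hV : ∀ j, AEStronglyMeasurable (V j) μ) :
    ‖∫ x, ∫ y, (∏ i, K i (withEndpoints x x y i.castSucc) (withEndpoints x x y i.succ)) *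
        ∏ j, V j (y j) ∂(Measure.pi fun _ => μ) ∂μ‖ₑ ≤
      ∫⁻ w, ‖∏ j, V j (w.2 j)‖ₑ ∂loopMeasure μ fun i x y => ‖K i x y‖ₑ := by
  have hVeval (j : Fin k) : AEStronglyMeasurable (fun w : E × (Fin k → E) => V j (w.2 j))
      (μ.prod (Measure.pi fun _ => μ)) :=
    (hV j).comp_quasiMeasurePreserving <|
      (Measure.quasiMeasurePreserving_eval (μ := fun _ => μ) j).comp
        Measure.quasiMeasurePreserving_snd
  have hK_enorm (i : Fin (k + 1)) : Measurable (Function.uncurry fun x y => ‖K i x y‖ₑ) :=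
    (hK i).enorm
  rw [lintegral_loopMeasure μ hK_enorm
    (Finset.aestronglyMeasurable_fun_prod _ fun j _ => hVeval j).enorm]
  refine (enorm_integral_le_lintegral_enorm _).trans <| lintegral_mono fun x =>
    (enorm_integral_le_lintegral_enorm _).trans_eq <| lintegral_congr fun y => ?_
  rw [enorm_mul, enorm_finset_prod, chainWeight]

section HeatKernel

lemma norm_sub_sq_div_add_norm_sub_sq_div {E : Type*} [NormedAddCommGroup E]
    [InnerProductSpace ℝ E] {u v : ℝ} (hu : u ≠ 0) (hv : v ≠ 0) (huv : u + v ≠ 0) (x a y : E) :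
    ‖x - a‖ ^ 2 / u + ‖a - y‖ ^ 2 / v =
      ‖x - y‖ ^ 2 / (u + v) +
        ‖a - (u + v)⁻¹ • (v • x + u • y)‖ ^ 2 / (u * v / (u + v)) := by
  have hmean : a - (u + v)⁻¹ • (v • x + u • y) = (u + v)⁻¹ • (u • (a - y) - v • (x - a)) := by
    rw [eq_inv_smul_iff₀ huv, smul_sub, smul_inv_smul₀ huv]
    module
  rw [hmean, ← sub_add_sub_cancel x a y, norm_smul, mul_pow, norm_sub_sq_real (u • (a - y)),
    norm_add_sq_real, norm_smul, norm_smul, inner_smul_left, inner_smul_right, mul_pow, mul_pow,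
    real_inner_comm (x - a)]
  simp only [Real.norm_eq_abs, sq_abs, conj_trivial]
  field_simp
  ring

variable {n : ℕ} {u v : ℝ}

lemma heatKernel_nonneg (hu : 0 ≤ u) (x y : EuclideanSpace ℝ (Fin n)) :
    0 ≤ heatKernel n u x y := by
  unfold heatKernel
  positivity

lemma heatKernel_self (x : EuclideanSpace ℝ (Fin n)) :
    heatKernel n u x x = (4 * π * u) ^ (-(n : ℝ) / 2) := by
  simp [heatKernel]

lemma heatKernel_add_right (u : ℝ) (x y a : EuclideanSpace ℝ (Fin n)) :
    heatKernel n u (x + a) (y + a) = heatKernel n u x y := by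
  simp only [heatKernel, add_sub_add_right_eq_sub]

lemma measurable_heatKernel (n : ℕ) (u : ℝ) : Measurable (Function.uncurry (heatKernel n u)) := by
  unfold heatKernel Function.uncurry
  fun_prop

/- The second factor on the right is the density at `a` of the Brownian bridge from `x` to `y`. -/
lemma heatKernel_mul_heatKernel (hu : 0 < u) (hv : 0 < v) (x a y : EuclideanSpace ℝ (Fin n)) :
    heatKernel n u x a * heatKernel n v a y =
      heatKernel n (u + v) x y *
        heatKernel n (u * v / (u + v)) a ((u + v)⁻¹ • (v • x + u • y)) := by
  have hexp : -‖x - a‖ ^ 2 / (4 * u) + -‖a - y‖ ^ 2 / (4 * v) =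
      -‖x - y‖ ^ 2 / (4 * (u + v)) +
        -‖a - (u + v)⁻¹ • (v • x + u • y)‖ ^ 2 / (4 * (u * v / (u + v))) := by
    have h := norm_sub_sq_div_add_norm_sub_sq_div hu.ne' hv.ne' (by positivity) x a y
    simp only [mul_comm (4 : ℝ), ← div_div, neg_div, ← neg_add, ← add_div, h]
  have hconst : 4 * π * u * (4 * π * v) = 4 * π * (u + v) * (4 * π * (u * v / (u + v))) := by
    field_simp
  simp only [heatKernel]
  rw [mul_mul_mul_comm, mul_mul_mul_comm (_ ^ _) (exp _) (_ ^ _) (exp (_ / (4 * (_ / _)))),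
    ← Real.exp_add, ← Real.exp_add, hexp, ← Real.mul_rpow (by positivity) (by positivity),
    ← Real.mul_rpow (by positivity) (by positivity), hconst]

lemma integral_heatKernel (hu : 0 < u) (y : EuclideanSpace ℝ (Fin n)) :
    ∫ x, heatKernel n u x y = 1 := by
  have hgauss : ∫ x : EuclideanSpace ℝ (Fin n), exp (-‖x‖ ^ 2 / (4 * u)) =
      (4 * π * u) ^ ((n : ℝ) / 2) := by
    have h := GaussianFourier.integral_rexp_neg_mul_sq_norm (V := EuclideanSpace ℝ (Fin n))
      (inv_pos.2 (mul_pos four_pos hu))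
    rw [finrank_euclideanSpace_fin, div_inv_eq_mul, mul_left_comm, ← mul_assoc] at h
    simpa only [neg_mul, mul_neg, div_eq_inv_mul] using h
  simp only [heatKernel]
  rw [integral_const_mul,
    integral_sub_right_eq_self (fun x : EuclideanSpace ℝ (Fin n) => exp (-‖x‖ ^ 2 / (4 * u))) y,
    hgauss, neg_div, Real.rpow_neg (by positivity), inv_mul_cancel₀ (by positivity)]

lemma lintegral_enorm_heatKernel (hu : 0 < u) (y : EuclideanSpace ℝ (Fin n)) :
    ∫⁻ x, ‖heatKernel n u x y‖ₑ = 1 := by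
  have hint : Integrable fun x => heatKernel n u x y :=
    .of_integral_ne_zero (by rw [integral_heatKernel hu]; exact one_ne_zero)
  simp only [← ofReal_integral_norm_eq_lintegral_enorm hint,
    norm_of_nonneg (heatKernel_nonneg hu.le _ _), integral_heatKernel hu, ENNReal.ofReal_one]

lemma lintegral_enorm_heatKernel_mul_enorm_heatKernel (hu : 0 < u) (hv : 0 < v)
    (x y : EuclideanSpace ℝ (Fin n)) :
    ∫⁻ a, ‖heatKernel n u x a‖ₑ * ‖heatKernel n v a y‖ₑ = ‖heatKernel n (u + v) x y‖ₑ := by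
  simp only [← enorm_mul, heatKernel_mul_heatKernel hu hv]
  simp only [enorm_mul]
  rw [lintegral_const_mul' _ _ enorm_ne_top, lintegral_enorm_heatKernel (by positivity), mul_one]

lemma map_loopMeasure_heatKernel {k : ℕ} {u : Fin (k + 1) → ℝ} (hu : ∀ i, 0 < u i) (j : Fin k) :
    (loopMeasure volume fun i x y => ‖heatKernel n (u i) x y‖ₑ).map (fun w => w.2 j) =
      ENNReal.ofReal ((4 * π * ∑ i, u i) ^ (-(n : ℝ) / 2)) • volume := by
  have hmeas (u : ℝ) : Measurable (Function.uncurry fun x y => ‖heatKernel n u x y‖ₑ) :=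
    (measurable_heatKernel n u).enorm
  have hsum : 0 ≤ ∑ i, u i := Finset.sum_nonneg fun i _ => (hu i).le
  rw [map_loopMeasure_eval volume (fun i => hmeas (u i))
      fun i x y a => by rw [heatKernel_add_right],
    lintegral_chainWeight_of_semigroup volume hmeas
      (fun u v hu hv => lintegral_enorm_heatKernel_mul_enorm_heatKernel hu hv) hu,
    Real.enorm_of_nonneg (heatKernel_nonneg hsum 0 0), heatKernel_self]

end HeatKernel

lemma norm_integral_heatKernel_loop_le {n k : ℕ} {u : Fin (k + 1) → ℝ} (hu : ∀ i, 0 < u i)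
    {V : Fin k → EuclideanSpace ℝ (Fin n) → ℝ} {p : Fin k → ℝ≥0∞} (hp : ∑ j, (p j)⁻¹ = 1)
    (hV : ∀ j, MemLp (V j) (p j)) :
    ‖∫ x, ∫ y : Fin k → EuclideanSpace ℝ (Fin n),
        (∏ i, heatKernel n (u i) (withEndpoints x x y i.castSucc) (withEndpoints x x y i.succ)) *
          ∏ j, V j (y j)‖ ≤
      (4 * π * ∑ i, u i) ^ (-(n : ℝ) / 2) * ∏ j, lpNorm (V j) (p j) volume := by
  have hsum : 0 ≤ ∑ i, u i := Finset.sum_nonneg fun i _ => (hu i).le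
  have hnorm : 0 ≤ ∏ j, lpNorm (V j) (p j) volume := Finset.prod_nonneg fun _ _ => lpNorm_nonneg
  rw [← ENNReal.ofReal_le_ofReal_iff (by positivity), ofReal_norm,
    ENNReal.ofReal_mul (by positivity), ENNReal.ofReal_prod_of_nonneg fun _ _ => lpNorm_nonneg]
  simp only [ofReal_lpNorm (hV _)]
  exact (enorm_integral_loop_le (fun i => measurable_heatKernel n (u i)) fun j => (hV j).1).trans
    (lintegral_prod_enorm_comp_le (by fun_prop) (map_loopMeasure_heatKernel hu)
      (fun j => (hV j).1) hp)

lemma lpNorm_natCast_eq_integral_abs_pow {α : Type*} {_ : MeasurableSpace α} {μ : Measure α}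
    {f : α → ℝ} (hf : AEStronglyMeasurable f μ) {k : ℕ} (hk : k ≠ 0) :
    lpNorm f k μ = (∫ x, |f x| ^ k ∂μ) ^ ((1 : ℝ) / k) := by
  rw [lpNorm_eq_integral_norm_rpow_toReal (by exact_mod_cast hk) (ENNReal.natCast_ne_top k) hf]
  simp only [ENNReal.toReal_natCast, rpow_natCast, norm_eq_abs, one_div]

lemma sum_const_inv_natCast_eq_one {k : ℕ} (hk : k ≠ 0) :
    ∑ _j : Fin k, (k : ℝ≥0∞)⁻¹ = 1 := by
  rw [Finset.sum_const, Finset.card_univ, Fintype.card_fin, nsmul_eq_mul,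
    ENNReal.mul_inv_cancel (by exact_mod_cast hk) (ENNReal.natCast_ne_top k)]

theorem statement12_general (n k : ℕ) {t : ℝ} (ht : 0 < t)
    (V : Fin k → EuclideanSpace ℝ (Fin n) → ℝ) (p : Fin k → ℝ≥0∞) (hp : ∑ j, (p j)⁻¹ = 1)
    (hV : ∀ j, MemLp (V j) (p j)) :
    |traceTermMulti n k V t| ≤
      (4 * π * t) ^ (-(n : ℝ) / 2) * (t ^ k / k.factorial) * ∏ j, lpNorm (V j) (p j) volume := by
  have hvol := volume_strictMono_Ioo_le k ht.le
  have hnorm : 0 ≤ ∏ j, lpNorm (V j) (p j) volume := Finset.prod_nonneg fun _ _ => lpNorm_nonneg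
  calc |traceTermMulti n k V t|
      ≤ (4 * π * t) ^ (-(n : ℝ) / 2) * (∏ j, lpNorm (V j) (p j) volume) *
          volume.real {s : Fin k → ℝ | StrictMono s ∧ ∀ i, s i ∈ Set.Ioo 0 t} := by
        rw [← Real.norm_eq_abs, traceTermMulti]
        refine norm_setIntegral_le_of_norm_le_const (hvol.trans_lt ENNReal.ofReal_lt_top)
          fun s hs => ?_
        have hmono : StrictMono (withEndpoints 0 t s) := strictMono_withEndpoints ht hs.1 hs.2
        have hpos (i : Fin (k + 1)) :
            0 < withEndpoints 0 t s i.succ - withEndpoints 0 t s i.castSucc :=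
          sub_pos.2 (hmono i.castSucc_lt_succ)
        have hbound := norm_integral_heatKernel_loop_le hpos hp hV
        rw [sum_withEndpoints_succ_sub_castSucc, sub_zero] at hbound
        exact hbound
    _ ≤ (4 * π * t) ^ (-(n : ℝ) / 2) * (∏ j, lpNorm (V j) (p j) volume) *
          (t ^ k / k.factorial) := by
        gcongr
        exact ENNReal.toReal_le_of_le_ofReal (by positivity) hvol
    _ = _ := mul_right_comm _ _ _

/-- `|T_k(t; V₁,…,V_k)| ≤ (4πt)^{-n/2} (tᵏ/k!) ∏_j ‖V_j‖_{L^k}`. -/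
theorem statement12 (n k : ℕ) (hn : 1 ≤ n) (hk : 1 ≤ k) (t : ℝ) (ht : 0 < t)
    (V : Fin k → (EuclideanSpace ℝ (Fin n) → ℝ))
    (hVmeas : ∀ j, Measurable (V j)) (hVbd : ∀ j, ∃ B : ℝ, ∀ x, |V j x| ≤ B)
    (hVsupp : ∀ j, HasCompactSupport (V j)) :
    |traceTermMulti n k V t| ≤
      (4 * Real.pi * t) ^ (-(n : ℝ) / 2) * (t ^ k / (Nat.factorial k)) *
        ∏ j : Fin k,
          (∫ x : EuclideanSpace ℝ (Fin n), |V j x| ^ k) ^ ((1 : ℝ) / k) := by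
  have hV (j : Fin k) : MemLp (V j) k := (hVbd j).elim fun B hB =>
    (hVsupp j).memLp_of_bound (hVmeas j).aestronglyMeasurable B (.of_forall hB)
  have hk₀ : k ≠ 0 := Nat.one_le_iff_ne_zero.1 hk
  simpa only [lpNorm_natCast_eq_integral_abs_pow (hV _).1 hk₀] using
    statement12_general n k ht V _ (sum_const_inv_natCast_eq_one hk₀) hV
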